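/- arXiv:1909.05012 — 12 statements merged into one kernel-verified Lean document; each statement's English description precedes it below -/
import Mathlib

section
/- Let n ≥ 1 and let f : ℝⁿ × ℝⁿ → ℝⁿ be twice continuously differentiable. Define the connection coefficients Γⁱⱼ(q,v) = −(1/2) ∂fⁱ/∂vʲ(q,v), the operator Γ(h)(q,v) = Σₖ vᵏ ∂h/∂qᵏ(q,v) + Σₖ fᵏ(q,v) ∂h/∂vᵏ(q,v) on C¹ functions h, and the Jacobi endomorphism components Φⁱⱼ(q,v) = −∂fⁱ/∂qʲ(q,v) − Σₖ Γᵏⱼ(q,v) Γⁱₖ(q,v) − Γ(Γⁱⱼ)(q,v). Then the Euler identity Σⱼ vʲ ∂fⁱ/∂vʲ(q,v) = 2 fⁱ(q,v) for all (q,v) ∈ ℝⁿ × ℝⁿ and all i holds if and only if both (a) fⁱ(q,v) − (1/2) Σⱼ vʲ ∂fⁱ/∂vʲ(q,v) = 0 for all (q,v), i and (b) Σⱼ Φⁱⱼ(q,v) vʲ = 0 for all (q,v), i. -/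
/-!
`∇T = 0` is a rearrangement of the Euler identity, so the content is that a spray satisfies
`Φ(T) = 0`. The Euler identity says `∑ⱼ Γⁱⱼ vʲ = -fⁱ`. Since `Γ` is a derivation with `Γ(vʲ) = fʲ`,
applying it to this identity gives `∑ⱼ Γ(Γⁱⱼ) vʲ + ∑ⱼ Γⁱⱼ fʲ = -Γ(fⁱ)`, while the definition of `Γⁱⱼ`
gives `Γ(fⁱ) = ∑ₖ vᵏ ∂fⁱ/∂qᵏ - 2 ∑ₖ Γⁱₖ fᵏ`. Hence
`∑ⱼ Γ(Γⁱⱼ) vʲ = -∑ₖ vᵏ ∂fⁱ/∂qᵏ + ∑ₖ Γⁱₖ fᵏ`. In `Φ(T)` the quadratic term contributes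
`-∑ₖ Γⁱₖ ∑ⱼ Γᵏⱼ vʲ = ∑ₖ Γⁱₖ fᵏ`, and everything cancels. The derivation property of `Γ` is obtained
by writing `Γ(h)` as the Fréchet derivative of `h` in the direction `(v, f(q, v))`.
-/

open scoped BigOperators

noncomputable section

/-- The partial derivative of a scalar function on ℝⁿ × ℝⁿ at a point, in a given direction. -/
def pder {n : ℕ} (h : (Fin n → ℝ) × (Fin n → ℝ) → ℝ)
    (p : (Fin n → ℝ) × (Fin n → ℝ)) (w : (Fin n → ℝ) × (Fin n → ℝ)) : ℝ :=
  fderiv ℝ h p w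

/-- Direction of the coordinate vector field ∂/∂qʲ. -/
def dirQ {n : ℕ} (j : Fin n) : (Fin n → ℝ) × (Fin n → ℝ) := (Pi.single j 1, 0)

/-- Direction of the coordinate vector field ∂/∂vʲ. -/
def dirV {n : ℕ} (j : Fin n) : (Fin n → ℝ) × (Fin n → ℝ) := (0, Pi.single j 1)

/-- Connection coefficients Γⁱⱼ(q,v) = −(1/2) ∂fⁱ/∂vʲ(q,v). -/
def conn {n : ℕ} (f : (Fin n → ℝ) × (Fin n → ℝ) → Fin n → ℝ) (i j : Fin n)
    (p : (Fin n → ℝ) × (Fin n → ℝ)) : ℝ :=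
  -(1/2) * pder (fun p => f p i) p (dirV j)

/-- The SODE vector field Γ acting as a derivation on functions:
Γ(h)(q,v) = Σₖ vᵏ ∂h/∂qᵏ(q,v) + Σₖ fᵏ(q,v) ∂h/∂vᵏ(q,v). -/
def sodeOp {n : ℕ} (f : (Fin n → ℝ) × (Fin n → ℝ) → Fin n → ℝ)
    (h : (Fin n → ℝ) × (Fin n → ℝ) → ℝ) (p : (Fin n → ℝ) × (Fin n → ℝ)) : ℝ :=
  (∑ k, p.2 k * pder h p (dirQ k)) + ∑ k, f p k * pder h p (dirV k)

/-- Components of the Jacobi endomorphism: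
Φⁱⱼ = −∂fⁱ/∂qʲ − Σₖ Γᵏⱼ Γⁱₖ − Γ(Γⁱⱼ). -/
def jacobiEndo {n : ℕ} (f : (Fin n → ℝ) × (Fin n → ℝ) → Fin n → ℝ) (i j : Fin n)
    (p : (Fin n → ℝ) × (Fin n → ℝ)) : ℝ :=
  - pder (fun p => f p i) p (dirQ j) - (∑ k, conn f k j p * conn f i k p)
    - sodeOp f (conn f i j) p

/-- The coordinate expression of `Γ(h)` is the derivative of `h` along the vector field
`(v, f(q, v))`. -/
lemma sodeOp_eq_fderiv {n : ℕ} (f : (Fin n → ℝ) × (Fin n → ℝ) → Fin n → ℝ)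
    (h : (Fin n → ℝ) × (Fin n → ℝ) → ℝ) (p : (Fin n → ℝ) × (Fin n → ℝ)) :
    sodeOp f h p = fderiv ℝ h p (p.2, f p) := by
  have hdir : ((p.2, f p) : (Fin n → ℝ) × (Fin n → ℝ)) =
      (∑ k, p.2 k • dirQ k) + ∑ k, f p k • dirV k := by
    ext j <;> simp [dirQ, dirV, Prod.fst_sum, Prod.snd_sum, Finset.sum_apply, Pi.single_apply]
  rw [hdir]
  simp [sodeOp, pder, map_sum]

lemma differentiable_conn {n : ℕ} {f : (Fin n → ℝ) × (Fin n → ℝ) → Fin n → ℝ}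
    (hf : ContDiff ℝ 2 f) (i j : Fin n) : Differentiable ℝ (conn f i j) := by
  have hfi : ContDiff ℝ 2 (fun p => f p i) := contDiff_pi.1 hf i
  have hd : Differentiable ℝ (fderiv ℝ (fun p => f p i)) :=
    (hfi.fderiv_right (m := 1) (by norm_num)).differentiable (by norm_num)
  unfold conn pder
  exact (hd.clm_apply (differentiable_const _)).const_mul _

/-- Leibniz rule for `Γ` on the functions `∑ⱼ Γⁱⱼ vʲ`, using `Γ(vʲ) = fʲ`. -/
lemma sodeOp_sum_conn_mul {n : ℕ} {f : (Fin n → ℝ) × (Fin n → ℝ) → Fin n → ℝ}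
    (hf : ContDiff ℝ 2 f) (i : Fin n) (p : (Fin n → ℝ) × (Fin n → ℝ)) :
    sodeOp f (fun p => ∑ j, conn f i j p * p.2 j) p =
      ∑ j, sodeOp f (conn f i j) p * p.2 j + ∑ j, conn f i j p * f p j := by
  have hv (j : Fin n) : HasFDerivAt (fun p : (Fin n → ℝ) × (Fin n → ℝ) => p.2 j)
      ((ContinuousLinearMap.proj (R := ℝ) (φ := fun _ : Fin n => ℝ) j).comp
        (ContinuousLinearMap.snd ℝ (Fin n → ℝ) (Fin n → ℝ))) p :=
    ((ContinuousLinearMap.proj (R := ℝ) (φ := fun _ : Fin n => ℝ) j).comp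
      (ContinuousLinearMap.snd ℝ (Fin n → ℝ) (Fin n → ℝ))).hasFDerivAt
  have hs := HasFDerivAt.fun_sum (u := Finset.univ) fun j _ =>
    ((differentiable_conn hf i j) p).hasFDerivAt.fun_mul (hv j)
  simp only [sodeOp_eq_fderiv]
  rw [hs.fderiv]
  simp [Finset.sum_add_distrib, add_comm, mul_comm]

/-- The definition of `Γⁱₖ` inserted in `Γ(fⁱ)`. -/
lemma sodeOp_component {n : ℕ} (f : (Fin n → ℝ) × (Fin n → ℝ) → Fin n → ℝ) (i : Fin n)
    (p : (Fin n → ℝ) × (Fin n → ℝ)) :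
    sodeOp f (fun p => f p i) p =
      ∑ j, pder (fun p => f p i) p (dirQ j) * p.2 j - 2 * ∑ j, conn f i j p * f p j := by
  simp only [sodeOp, conn, Finset.mul_sum, sub_eq_add_neg, ← Finset.sum_neg_distrib]
  congr 1 <;> exact Finset.sum_congr rfl fun k _ => by ring

lemma sum_conn_mul_of_euler {n : ℕ} {f : (Fin n → ℝ) × (Fin n → ℝ) → Fin n → ℝ}
    (h : ∀ (p : (Fin n → ℝ) × (Fin n → ℝ)) (i : Fin n),
      ∑ j, p.2 j * pder (fun p => f p i) p (dirV j) = 2 * f p i)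
    (p : (Fin n → ℝ) × (Fin n → ℝ)) (i : Fin n) :
    ∑ j, conn f i j p * p.2 j = -f p i := by
  have h1 : ∑ j, conn f i j p * p.2 j =
      -(1/2) * ∑ j, p.2 j * pder (fun p => f p i) p (dirV j) := by
    rw [Finset.mul_sum]
    exact Finset.sum_congr rfl fun j _ => by unfold conn; ring
  rw [h1, h p i]
  ring

/-- A SODE is a spray (Euler identity: Σⱼ vʲ ∂fⁱ/∂vʲ = 2 fⁱ) if and only if
∇T = 0 (i.e. fⁱ − (1/2) Σⱼ vʲ ∂fⁱ/∂vʲ = 0) and Φ(T) = 0 (i.e. Σⱼ Φⁱⱼ vʲ = 0). -/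
theorem spray_iff_nablaT_eq_zero_and_phiT_eq_zero
    (n : ℕ) (hn : 1 ≤ n) (f : (Fin n → ℝ) × (Fin n → ℝ) → Fin n → ℝ)
    (hf : ContDiff ℝ 2 f) :
    (∀ (p : (Fin n → ℝ) × (Fin n → ℝ)) (i : Fin n),
        ∑ j, p.2 j * pder (fun p => f p i) p (dirV j) = 2 * f p i) ↔
      ((∀ (p : (Fin n → ℝ) × (Fin n → ℝ)) (i : Fin n),
          f p i - (1/2) * ∑ j, p.2 j * pder (fun p => f p i) p (dirV j) = 0) ∧
        (∀ (p : (Fin n → ℝ) × (Fin n → ℝ)) (i : Fin n),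
          ∑ j, jacobiEndo f i j p * p.2 j = 0)) := by
  refine ⟨fun h => ⟨fun p i => by rw [h p i]; ring, fun p i => ?_⟩,
    fun h p i => by linarith [h.1 p i]⟩
  have hE := sum_conn_mul_of_euler h
  have hneg : sodeOp f (fun p => -f p i) p = -sodeOp f (fun p => f p i) p := by
    simp only [sodeOp_eq_fderiv, fderiv_fun_neg, neg_apply]
  have hL := sodeOp_sum_conn_mul hf i p
  simp only [hE] at hL
  rw [hneg, sodeOp_component] at hL
  have hquad : ∑ j, (∑ k, conn f k j p * conn f i k p) * p.2 j =
      -∑ k, conn f i k p * f p k := by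
    simp only [Finset.sum_mul]
    rw [Finset.sum_comm, ← Finset.sum_neg_distrib]
    refine Finset.sum_congr rfl fun k _ => ?_
    rw [← mul_neg, ← hE p k, Finset.mul_sum]
    exact Finset.sum_congr rfl fun j _ => by ring
  simp only [jacobiEndo, sub_mul, neg_mul, Finset.sum_sub_distrib, Finset.sum_neg_distrib]
  rw [hquad]
  linarith
end
end

section
/- Let n ≥ 1 and let f : ℝⁿ × ℝⁿ → ℝⁿ be continuously differentiable. Then the following are equivalent: (i) for every open interval I containing 0 and every twice differentiable solution c : I → ℝⁿ of c''(t) = f(c(t), c'(t)), both J(t) = c'(t) and J(t) = t · c'(t) satisfy the variational equation J''(t) = D_q f(c(t), c'(t)) J(t) + D_v f(c(t), c'(t)) J'(t) on I; (ii) for all (q,v) ∈ ℝⁿ × ℝⁿ, D_v f(q,v) · v = 2 f(q,v). -/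
/-!
Differentiating `c'' = f(c, c')` by the chain rule shows that `c'` is always a Jacobi field:
`c''' = D f (c', c'')`. For `J = t c'` one has `J' = c' + t c''` and
`J'' = 2 c'' + t c''' = 2 f + t D f (c', c'')`, while the right-hand side of the variational equation
is `t D f (c', c'') + D_v f c'`. Hence `t c'` is a Jacobi field along `c` exactly when
`D_v f (c, c') c' = 2 f (c, c')` along `c`. Every point `(q, v)` is `(c 0, c' 0)` for some local
solution `c` (Picard-Lindelöf applied to the first-order system `(q, v)' = (v, f(q, v))`), so
evaluating at `t = 0` gives the spray condition everywhere.
-/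

noncomputable section

/-- `J` satisfies the variational (Jacobi) equation
`J''(t) = D_q f(c(t),c'(t)) J(t) + D_v f(c(t),c'(t)) J'(t)` on the set `I`,
along a curve `c` with velocity `c'`. -/
def SatisfiesVariationalEqOn {n : ℕ} (f : (Fin n → ℝ) × (Fin n → ℝ) → Fin n → ℝ)
    (c c' : ℝ → Fin n → ℝ) (J : ℝ → Fin n → ℝ) (I : Set ℝ) : Prop :=
  ∃ J' J'' : ℝ → Fin n → ℝ,
    (∀ t ∈ I, HasDerivAt J (J' t) t) ∧
    (∀ t ∈ I, HasDerivAt J' (J'' t) t) ∧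
    (∀ t ∈ I, J'' t =
      fderiv ℝ f (c t, c' t) (J t, 0) + fderiv ℝ f (c t, c' t) (0, J' t))

/-- Third derivative of a solution: along a solution of `c'' = f(c, c')`, the map `t ↦ f(c t, c' t)`
is differentiable, with derivative given by the chain rule. -/
lemma hasDerivAt_acceleration {n : ℕ} {f : (Fin n → ℝ) × (Fin n → ℝ) → Fin n → ℝ}
    (hf : ContDiff ℝ 1 f) {c c' : ℝ → Fin n → ℝ} {t : ℝ}
    (hc : HasDerivAt c (c' t) t) (hc' : HasDerivAt c' (f (c t, c' t)) t) :
    HasDerivAt (fun s => f (c s, c' s))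
      (fderiv ℝ f (c t, c' t) (c' t, f (c t, c' t))) t :=
  ((hf.differentiable one_ne_zero) (c t, c' t)).hasFDerivAt.comp_hasDerivAt t (hc.prodMk hc')

/-- The derivative of the field `t ↦ t c'` along a solution. -/
lemma hasDerivAt_smul_velocity {n : ℕ} {c' : ℝ → Fin n → ℝ} {a : Fin n → ℝ} {t : ℝ}
    (hc' : HasDerivAt c' a t) :
    HasDerivAt (fun s => s • c' s) (c' t + t • a) t := by
  have h := (hasDerivAt_id t).smul hc'
  simp only [id, one_smul] at h
  rw [add_comm]
  exact h

/-- The second derivative of `t ↦ t c'` along a solution. -/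
lemma hasDerivAt_deriv_smul_velocity {n : ℕ} {f : (Fin n → ℝ) × (Fin n → ℝ) → Fin n → ℝ}
    (hf : ContDiff ℝ 1 f) {c c' : ℝ → Fin n → ℝ} {t : ℝ}
    (hc : HasDerivAt c (c' t) t) (hc' : HasDerivAt c' (f (c t, c' t)) t) :
    HasDerivAt (fun s => c' s + s • f (c s, c' s))
      ((2 : ℝ) • f (c t, c' t) +
        t • fderiv ℝ f (c t, c' t) (c' t, f (c t, c' t))) t := by
  have h := hc'.add (hasDerivAt_smul_velocity (hasDerivAt_acceleration hf hc hc'))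
  rw [← add_assoc, ← two_smul ℝ] at h
  exact h

/-- Every `(q, v)` is the initial state of a solution of `c'' = f(c, c')` on some `(-ε, ε)`. -/
lemma exists_local_solution {n : ℕ} {f : (Fin n → ℝ) × (Fin n → ℝ) → Fin n → ℝ}
    (hf : ContDiff ℝ 1 f) (p : (Fin n → ℝ) × (Fin n → ℝ)) :
    ∃ c c' : ℝ → Fin n → ℝ, (c 0, c' 0) = p ∧ ∃ ε > (0 : ℝ), ∀ t ∈ Set.Ioo (-ε) ε,
      HasDerivAt c (c' t) t ∧ HasDerivAt c' (f (c t, c' t)) t := by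
  have hF : ContDiffAt ℝ 1 (fun x : (Fin n → ℝ) × (Fin n → ℝ) => (x.2, f x)) p :=
    (contDiff_snd.prodMk hf).contDiffAt
  obtain ⟨α, h0, ε, hε, h⟩ :=
    hF.exists_forall_mem_closedBall_exists_eq_forall_mem_Ioo_hasDerivAt₀ 0
  refine ⟨fun t => (α t).1, fun t => (α t).2, h0, ε, hε, fun t ht => ?_⟩
  have ht' := h t (by simpa using ht)
  exact ⟨(hasFDerivAt_fst (𝕜 := ℝ) (p := α t)).comp_hasDerivAt t ht',
    (hasFDerivAt_snd (𝕜 := ℝ) (p := α t)).comp_hasDerivAt t ht'⟩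

/-- For a C¹ SODE `q̈ = f(q,q̇)` on ℝⁿ, the vector fields `ċ` and `t·ċ` along `c`
are Jacobi fields for every base integral curve `c`, if and only if the SODE is a
spray, i.e. `D_v f(q,v)·v = 2 f(q,v)`. -/
theorem trivial_jacobi_fields_iff_spray
    (n : ℕ) (hn : 1 ≤ n) (f : (Fin n → ℝ) × (Fin n → ℝ) → Fin n → ℝ)
    (hf : ContDiff ℝ 1 f) :
    (∀ (I : Set ℝ), IsOpen I → I.OrdConnected → (0 : ℝ) ∈ I →
      ∀ c c' c'' : ℝ → Fin n → ℝ,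
        (∀ t ∈ I, HasDerivAt c (c' t) t) →
        (∀ t ∈ I, HasDerivAt c' (c'' t) t) →
        (∀ t ∈ I, c'' t = f (c t, c' t)) →
        SatisfiesVariationalEqOn f c c' (fun t => c' t) I ∧
        SatisfiesVariationalEqOn f c c' (fun t => t • c' t) I) ↔
    (∀ p : (Fin n → ℝ) × (Fin n → ℝ), fderiv ℝ f p (0, p.2) = (2 : ℝ) • f p) := by
  constructor
  · intro H p
    obtain ⟨c, c', rfl, ε, hε, h⟩ := exists_local_solution hf p
    have h0 : (0 : ℝ) ∈ Set.Ioo (-ε) ε := ⟨neg_lt_zero.mpr hε, hε⟩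
    obtain ⟨-, J', J'', hJ, hJ', hJeq⟩ := H (Set.Ioo (-ε) ε) isOpen_Ioo Set.ordConnected_Ioo h0
      c c' (fun t => f (c t, c' t)) (fun t ht => (h t ht).1) (fun t ht => (h t ht).2)
      (fun _ _ => rfl)
    have hJ'_eq : ∀ t ∈ Set.Ioo (-ε) ε, J' t = c' t + t • f (c t, c' t) := fun t ht =>
      (hJ t ht).unique (hasDerivAt_smul_velocity (h t ht).2)
    -- `J'` is known only on the interval, so its derivative at `0` is compared through germs.
    have hev : J' =ᶠ[nhds 0] fun t => c' t + t • f (c t, c' t) :=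
      Filter.eventually_of_mem (isOpen_Ioo.mem_nhds h0) hJ'_eq
    have hJ''0 := (hJ' 0 h0).unique
      ((hasDerivAt_deriv_smul_velocity hf (h 0 h0).1 (h 0 h0).2).congr_of_eventuallyEq hev)
    have key := hJeq 0 h0
    rw [hJ''0, hJ'_eq 0 h0] at key
    simpa [show ((0 : Fin n → ℝ), (0 : Fin n → ℝ)) = 0 from rfl] using key.symm
  · intro H I _ _ _ c c' c'' hc hc' hsol
    have hv : ∀ t ∈ I, HasDerivAt c' (f (c t, c' t)) t := fun t ht => hsol t ht ▸ hc' t ht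
    have split : ∀ (q : (Fin n → ℝ) × (Fin n → ℝ)) (a b : Fin n → ℝ),
        fderiv ℝ f q (a, b) = fderiv ℝ f q (a, 0) + fderiv ℝ f q (0, b) := fun q a b => by
      rw [← map_add]; simp
    refine ⟨⟨_, _, hv, fun t ht => hasDerivAt_acceleration hf (hc t ht) (hv t ht),
        fun t _ => split _ _ _⟩,
      ⟨_, _, fun t ht => hasDerivAt_smul_velocity (hv t ht),
        fun t ht => hasDerivAt_deriv_smul_velocity hf (hc t ht) (hv t ht), fun t _ => ?_⟩⟩
    have hspray := H (c t, c' t)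
    dsimp only at hspray ⊢
    rw [← hspray, ← split, ← map_smul, ← map_add]
    simp
end
end

section
/- Let n ≥ 1, let f : ℝⁿ × ℝⁿ → ℝⁿ be continuously differentiable, and let γ : ℝ × ℝ → ℝⁿ be twice continuously differentiable (C² jointly in (s,t)) such that for every (s,t), ∂²γ/∂t²(s,t) = f(γ(s,t), ∂γ/∂t(s,t)). Set c(t) = γ(0,t) and J(t) = ∂γ/∂s(0,t). Then J is twice differentiable and satisfies the variational equation J''(t) = D_q f(c(t), c'(t)) J(t) + D_v f(c(t), c'(t)) J'(t) for all t ∈ ℝ. -/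
/-!
Write `v = ∂γ/∂t`. By the symmetry of the second derivative of `γ`, `J' = ∂v/∂s` along `s = 0`.
The function `t ↦ ∂v/∂s (0, t)` need not look differentiable, as `γ` is only C², but the equation
says that `∂v/∂t = g` with `g(s,t) = f(γ(s,t), v(s,t))` of class C¹. Hence
`v(s,t) = v(s,0) + ∫₀ᵗ g(s,τ) dτ`, and differentiating under the integral sign gives
`∂v/∂s (0,t) = ∂v/∂s (0,0) + ∫₀ᵗ ∂g/∂s (0,τ) dτ`, which is C¹ in `t` with derivative
`∂g/∂s (0,t)` (`hasDerivAt_fderiv_of_fderiv_eq`). The chain rule for `g` yields the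
variational equation.
-/

noncomputable section

open intervalIntegral Filter Topology in
/-- Interchange of partial derivatives under a one-sided hypothesis: if `v` is C¹ and `∂v/∂t = g`
is C¹, then `∂v/∂s` is differentiable in `t`, with derivative `∂g/∂s`, although `v` need not be
C². -/
theorem hasDerivAt_fderiv_of_fderiv_eq {E : Type*} [NormedAddCommGroup E] [NormedSpace ℝ E]
    [CompleteSpace E] {v g : ℝ × ℝ → E} (hv : ContDiff ℝ 1 v) (hg : ContDiff ℝ 1 g)
    (hvg : ∀ p, fderiv ℝ v p (0, 1) = g p) (t : ℝ) :
    HasDerivAt (fun t => fderiv ℝ v (0, t) (1, 0)) (fderiv ℝ g (0, t) (1, 0)) t := by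
  have hds : ∀ {w : ℝ × ℝ → E}, ContDiff ℝ 1 w → ∀ s t,
      HasDerivAt (fun s => w (s, t)) (fderiv ℝ w (s, t) (1, 0)) s := fun hw s t =>
    ((hw.differentiable one_ne_zero (s, t)).hasFDerivAt).comp_hasDerivAt s
      ((hasDerivAt_id s).prodMk (hasDerivAt_const s t))
  have hdt : ∀ s t, HasDerivAt (fun t => v (s, t)) (g (s, t)) t := fun s t => by
    rw [← hvg]
    exact ((hv.differentiable one_ne_zero (s, t)).hasFDerivAt).comp_hasDerivAt t
      ((hasDerivAt_const t s).prodMk (hasDerivAt_id t))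
  have hgs : Continuous fun p => fderiv ℝ g p (1, 0) :=
    (hg.continuous_fderiv one_ne_zero).clm_apply continuous_const
  have hgc (s : ℝ) : Continuous fun τ => g (s, τ) := hg.continuous.comp (by fun_prop)
  have hgs0 : Continuous fun τ : ℝ => fderiv ℝ g (0, τ) (1, 0) := hgs.comp (by fun_prop)
  have hint (s t : ℝ) : v (s, t) = v (s, 0) + ∫ τ in (0 : ℝ)..t, g (s, τ) := by
    rw [integral_eq_sub_of_hasDerivAt (fun τ _ => hdt s τ) ((hgc s).intervalIntegrable _ _)]
    abel
  have hkey (t : ℝ) : fderiv ℝ v (0, t) (1, 0) =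
      fderiv ℝ v (0, 0) (1, 0) + ∫ τ in (0 : ℝ)..t, fderiv ℝ g (0, τ) (1, 0) := by
    -- compactness provides the constant that dominates `∂g/∂s` near `s = 0`
    obtain ⟨C, hC⟩ := ((isCompact_Icc (a := (-1 : ℝ)) (b := 1)).prod
      (isCompact_uIcc (a := (0 : ℝ)) (b := t))).exists_bound_of_continuousOn hgs.continuousOn
    have h := (hasDerivAt_integral_of_dominated_loc_of_deriv_le (μ := MeasureTheory.volume)
      (F := fun s τ => g (s, τ)) (F' := fun s τ => fderiv ℝ g (s, τ) (1, 0))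
      (x₀ := (0 : ℝ)) (a := 0) (b := t) (s := Set.Icc (-1) 1) (bound := fun _ => C)
      (Icc_mem_nhds (by norm_num) (by norm_num))
      (Eventually.of_forall fun s => (hgc s).aestronglyMeasurable)
      ((hgc 0).intervalIntegrable _ _) hgs0.aestronglyMeasurable
      (Eventually.of_forall fun τ hτ s hs => hC (s, τ) ⟨hs, Set.uIoc_subset_uIcc hτ⟩)
      intervalIntegrable_const
      (Eventually.of_forall fun τ _ s _ => hds hg s τ)).2
    refine (hds hv 0 t).unique ?_
    rw [funext fun s => hint s t]
    exact (hds hv 0 0).add h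
  rw [funext hkey]
  exact (integral_hasDerivAt_right (hgs0.intervalIntegrable _ _)
    (hgs0.stronglyMeasurableAtFilter _ _) hgs0.continuousAt).const_add _

/-- The variation vector field of a 1-parameter family of base integral curves of a
SODE `q̈ = f(q,q̇)` is a Jacobi field: if `γ : ℝ × ℝ → ℝⁿ` is C² with
`∂²γ/∂t²(s,t) = f(γ(s,t), ∂γ/∂t(s,t))` for all `(s,t)`, then `J(t) = ∂γ/∂s(0,t)` is
twice differentiable and satisfies
`J''(t) = D_q f(c(t),c'(t)) J(t) + D_v f(c(t),c'(t)) J'(t)`, where `c(t) = γ(0,t)`. -/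
theorem variation_vector_field_is_jacobi_field
    (n : ℕ) (hn : 1 ≤ n) (f : (Fin n → ℝ) × (Fin n → ℝ) → Fin n → ℝ)
    (hf : ContDiff ℝ 1 f)
    (γ : ℝ × ℝ → Fin n → ℝ) (hγ : ContDiff ℝ 2 γ)
    (hsol : ∀ s t : ℝ,
      fderiv ℝ (fun p : ℝ × ℝ => fderiv ℝ γ p ((0 : ℝ), (1 : ℝ))) (s, t) (0, 1) =
        f (γ (s, t), fderiv ℝ γ (s, t) ((0 : ℝ), (1 : ℝ))))
    (c J : ℝ → Fin n → ℝ)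
    (hc : ∀ t : ℝ, c t = γ (0, t))
    (hJ : ∀ t : ℝ, J t = fderiv ℝ γ (0, t) ((1 : ℝ), (0 : ℝ))) :
    (∀ t : ℝ, DifferentiableAt ℝ J t) ∧
    (∀ t : ℝ, DifferentiableAt ℝ (deriv J) t) ∧
    (∀ t : ℝ, deriv (deriv J) t =
      fderiv ℝ f (c t, deriv c t) (J t, 0) +
        fderiv ℝ f (c t, deriv c t) (0, deriv J t)) := by
  set v : ℝ × ℝ → Fin n → ℝ := fun p => fderiv ℝ γ p (0, 1)
  have hγ' : ContDiff ℝ 1 (fderiv ℝ γ) := hγ.fderiv_right (by norm_num)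
  have hv : ContDiff ℝ 1 v := hγ'.clm_apply contDiff_const
  have hγ1 : ContDiff ℝ 1 γ := hγ.of_le (by norm_num)
  have hg : ContDiff ℝ 1 fun p => f (γ p, v p) := hf.comp (hγ1.prodMk hv)
  have hline (t : ℝ) : HasDerivAt (fun t : ℝ => ((0 : ℝ), t)) (0, 1) t :=
    (hasDerivAt_const t _).prodMk (hasDerivAt_id t)
  have hsnd (p a : ℝ × ℝ) :
      HasFDerivAt (fun p => fderiv ℝ γ p a) ((fderiv ℝ (fderiv ℝ γ) p).flip a) p := by
    simpa using (hγ'.differentiable one_ne_zero p).hasFDerivAt.clm_apply (hasFDerivAt_const a p)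
  have hdc (t : ℝ) : deriv c t = v (0, t) := by
    rw [funext hc]
    exact ((hγ1.differentiable one_ne_zero (0, t)).hasFDerivAt.comp_hasDerivAt t (hline t)).deriv
  have hJd (t : ℝ) : HasDerivAt J (fderiv ℝ v (0, t) (1, 0)) t := by
    have h := (hsnd (0, t) (1, 0)).comp_hasDerivAt t (hline t)
    have hsymm := hγ.contDiffAt.isSymmSndFDerivAt (x := ((0 : ℝ), t)) (by simp)
    rw [funext hJ, (hsnd (0, t) (0, 1)).fderiv, ContinuousLinearMap.flip_apply,
      hsymm.eq (1, 0) (0, 1)]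
    exact h
  have hdJ : deriv J = fun t => fderiv ℝ v (0, t) (1, 0) := funext fun t => (hJd t).deriv
  have hddJ (t : ℝ) := hasDerivAt_fderiv_of_fderiv_eq hv hg (fun p => hsol p.1 p.2) t
  refine ⟨fun t => (hJd t).differentiableAt, fun t => ?_, fun t => ?_⟩
  · rw [hdJ]
    exact (hddJ t).differentiableAt
  · have hchain := (hf.differentiable one_ne_zero (γ (0, t), v (0, t))).hasFDerivAt.comp (0, t)
      ((hγ1.differentiable one_ne_zero (0, t)).hasFDerivAt.prodMk
        (hv.differentiable one_ne_zero (0, t)).hasFDerivAt)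
    have hval : fderiv ℝ (fun p => f (γ p, v p)) (0, t) (1, 0) =
        fderiv ℝ f (γ (0, t), v (0, t)) (J t, fderiv ℝ v (0, t) (1, 0)) := by
      rw [hJ]
      exact congrArg (fun L => L (1, 0)) hchain.fderiv
    rw [hdc, hc, hdJ, (hddJ t).deriv, hval, ← map_add]
    simp
end
end

section
/- Let n ≥ 1, let f : ℝⁿ × ℝⁿ → ℝⁿ be continuously differentiable, let q₀ ∈ ℝⁿ, and let φ : ℝⁿ × ℝ → ℝⁿ be twice continuously differentiable (C² jointly) such that for every u ∈ ℝⁿ: φ(u,0) = q₀, ∂φ/∂t(u,0) = u, and ∂²φ/∂t²(u,t) = f(φ(u,t), ∂φ/∂t(u,t)) for all t. Fix v ∈ ℝⁿ and t₁ ≠ 0, and set c(t) = φ(v,t). Then there exists a not-identically-zero solution J of the variational equation J''(t) = D_q f(c(t), c'(t)) J(t) + D_v f(c(t), c'(t)) J'(t) with J(0) = 0 and J(t₁) = 0 if and only if the derivative at v of the endpoint map u ↦ φ(u, t₁) (as a linear map ℝⁿ → ℝⁿ) is not injective. -/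
/-!
The field `J_w(t) = ∂φ/∂u(v,t) w` is the unique Jacobi field along `c` with `J(0) = 0` and
`J'(0) = w`. Hence Jacobi fields vanishing at `0` and `t₁` correspond to vectors `w` in the kernel
of the derivative at `v` of `u ↦ φ(u,t₁)`, and `J_w` is nontrivial exactly when `w ≠ 0`.

That `J_w` is a Jacobi field rests on `hasDerivAt_fderiv_apply_of_hasDerivAt`: if `h` and its time
derivative `g` are both C¹, then the time derivative of `∂h/∂u` is `∂g/∂u`. It is applied twice, to
`h = φ`, `g = ∂φ/∂t` and to `h = ∂φ/∂t`, `g = f(φ, ∂φ/∂t)`. In the second case `h` is only C¹, so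
symmetry of second derivatives is not available; instead the identity
`h(u,t) = h(u,0) + ∫₀ᵗ g(u,τ) dτ` is differentiated in `u` under the integral sign.
Uniqueness of `J_w` is `linear_secondOrder_eq_zero`, a consequence of Grönwall's inequality.
-/

noncomputable section

open Set Filter Topology

/-- The derivative of `h` in the space directions, moved from time `0` to time `t` by
differentiating `h(u,t) = h(u,0) + ∫₀ᵗ g(u,τ) dτ` under the integral sign. -/
lemma fderiv_apply_eq_add_integral {E F : Type*} [NormedAddCommGroup E] [NormedSpace ℝ E]
    [NormedAddCommGroup F] [NormedSpace ℝ F] [CompleteSpace F]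
    {h g : E × ℝ → F} (hh : ContDiff ℝ 1 h) (hg : ContDiff ℝ 1 g)
    (hd : ∀ u t, HasDerivAt (fun t => h (u, t)) (g (u, t)) t) (v w : E) (t : ℝ) :
    fderiv ℝ h (v, t) (w, 0) =
      fderiv ℝ h (v, 0) (w, 0) + ∫ τ in (0 : ℝ)..t, fderiv ℝ g (v, τ) (w, 0) := by
  have hline : ∀ (k : E × ℝ → F), ContDiff ℝ 1 k → ∀ s τ : ℝ,
      HasDerivAt (fun s : ℝ => k (v + s • w, τ)) (fderiv ℝ k (v + s • w, τ) (w, 0)) s := by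
    intro k hk s τ
    have h1 : HasDerivAt (fun s : ℝ => (v + s • w, τ)) (w, (0 : ℝ)) s := by
      have h2 : HasDerivAt (fun s : ℝ => v + s • w) w s := by
        simpa using ((hasDerivAt_id s).smul_const w).const_add v
      exact h2.prodMk (hasDerivAt_const s τ)
    exact ((hk.differentiable one_ne_zero) _).hasFDerivAt.comp_hasDerivAt s h1
  have hGc : Continuous (fun p : ℝ × ℝ => fderiv ℝ g (v + p.1 • w, p.2) (w, 0)) :=
    ((hg.continuous_fderiv one_ne_zero).comp (by fun_prop)).clm_apply continuous_const
  have hgc : ∀ s : ℝ, Continuous (fun τ : ℝ => g (v + s • w, τ)) :=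
    fun s => hg.continuous.comp (by fun_prop)
  obtain ⟨C, hC⟩ := ((isCompact_Icc (a := (-1 : ℝ)) (b := 1)).prod
    (isCompact_uIcc (a := (0 : ℝ)) (b := t))).exists_bound_of_continuousOn hGc.continuousOn
  have hint : HasDerivAt (fun s : ℝ => ∫ τ in (0 : ℝ)..t, g (v + s • w, τ))
      (∫ τ in (0 : ℝ)..t, fderiv ℝ g (v + (0 : ℝ) • w, τ) (w, 0)) 0 := by
    refine (intervalIntegral.hasDerivAt_integral_of_dominated_loc_of_deriv_le
      (F := fun s τ => g (v + s • w, τ))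
      (F' := fun s τ => fderiv ℝ g (v + s • w, τ) (w, 0)) (bound := fun _ => C)
      (Icc_mem_nhds (by norm_num : (-1 : ℝ) < 0) (by norm_num : (0 : ℝ) < 1))
      (Eventually.of_forall fun s => (hgc s).aestronglyMeasurable)
      ((hgc 0).intervalIntegrable _ _)
      (hGc.comp (by fun_prop : Continuous fun τ : ℝ => ((0 : ℝ), τ))).aestronglyMeasurable
      (Eventually.of_forall fun τ hτ s hs => hC (s, τ) ⟨hs, uIoc_subset_uIcc hτ⟩)
      intervalIntegrable_const
      (Eventually.of_forall fun τ _ s _ => hline g hg s τ)).2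
  have hftc : (fun s : ℝ => h (v + s • w, t)) =
      fun s : ℝ => h (v + s • w, 0) + ∫ τ in (0 : ℝ)..t, g (v + s • w, τ) := by
    funext s
    rw [intervalIntegral.integral_eq_sub_of_hasDerivAt (fun τ _ => hd (v + s • w) τ)
      ((hgc s).intervalIntegrable _ _)]
    abel
  have h1 := hline h hh 0 t
  rw [hftc] at h1
  simpa using h1.unique ((hline h hh 0 0).add hint)

lemma hasDerivAt_fderiv_apply_of_hasDerivAt {E F : Type*} [NormedAddCommGroup E]
    [NormedSpace ℝ E] [NormedAddCommGroup F] [NormedSpace ℝ F] [CompleteSpace F]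
    {h g : E × ℝ → F} (hh : ContDiff ℝ 1 h) (hg : ContDiff ℝ 1 g)
    (hd : ∀ u t, HasDerivAt (fun t => h (u, t)) (g (u, t)) t) (v w : E) (t : ℝ) :
    HasDerivAt (fun t => fderiv ℝ h (v, t) (w, 0)) (fderiv ℝ g (v, t) (w, 0)) t := by
  have hc : Continuous (fun τ : ℝ => fderiv ℝ g (v, τ) (w, 0)) :=
    ((hg.continuous_fderiv one_ne_zero).comp (by fun_prop)).clm_apply continuous_const
  rw [funext (fderiv_apply_eq_add_integral hh hg hd v w)]
  exact (intervalIntegral.integral_hasDerivAt_right (hc.intervalIntegrable _ _)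
    (hc.stronglyMeasurableAtFilter _ _) hc.continuousAt).const_add _

/-- Uniqueness for the linear second-order equation `P'' = L(t)(P, P')`, with `Q = P'`. -/
lemma linear_secondOrder_eq_zero {E : Type*} [NormedAddCommGroup E] [NormedSpace ℝ E]
    {L : ℝ → E × E →L[ℝ] E} (hL : Continuous L) {P Q : ℝ → E}
    (hP : ∀ t, HasDerivAt P (Q t) t) (hQ : ∀ t, HasDerivAt Q (L t (P t, Q t)) t)
    (hP0 : P 0 = 0) (hQ0 : Q 0 = 0) (t : ℝ) : P t = 0 := by
  -- The equation has a uniform Lipschitz constant only on bounded time intervals.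
  let A : ℝ → E × E →L[ℝ] E × E := fun t => (ContinuousLinearMap.snd ℝ E E).prod (L t)
  have hA : Continuous A := by
    have : A = fun t => ContinuousLinearMap.prodₗᵢ ℝ (ContinuousLinearMap.snd ℝ E E, L t) := rfl
    rw [this]
    fun_prop
  obtain ⟨C, hC⟩ := (isCompact_Icc (a := -(|t| + 1)) (b := |t| + 1)).exists_bound_of_continuousOn
    hA.continuousOn
  have key := ODE_solution_unique_of_mem_Ioo (v := fun t y => A t y) (s := fun _ => univ)
    (K := C.toNNReal) (a := -(|t| + 1)) (b := |t| + 1) (t₀ := 0)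
    (f := fun t => (P t, Q t)) (g := fun _ => 0)
    (fun τ hτ => ((A τ).lipschitz.weaken
      (by rw [← NNReal.coe_le_coe]; exact (hC τ (Ioo_subset_Icc_self hτ)).trans
            (Real.le_coe_toNNReal C))).lipschitzOnWith)
    ⟨by linarith [abs_nonneg t], by linarith [abs_nonneg t]⟩
    (fun τ _ => ⟨(hP τ).prodMk (hQ τ), mem_univ _⟩)
    (fun τ _ => ⟨by simpa using hasDerivAt_const τ (0 : E × E), mem_univ _⟩)
    (by simp [hP0, hQ0])
  exact congrArg Prod.fst
    (key (x := t) ⟨by linarith [neg_abs_le t], by linarith [le_abs_self t]⟩)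

/-- Conjugate points via the exponential map: for a C¹ SODE `q̈ = f(q,q̇)` on ℝⁿ, let
`φ(u,t)` be the solution with `φ(u,0) = q₀` and `∂φ/∂t(u,0) = u`.  Fix `v` and `t₁ ≠ 0`
and let `c(t) = φ(v,t)`.  Then there is a not-identically-zero Jacobi field along `c`
vanishing at `0` and `t₁` if and only if the derivative at `v` of the endpoint map
`u ↦ φ(u,t₁)` fails to be injective. -/
theorem conjugate_point_iff_exponential_map_critical
    (n : ℕ) (hn : 1 ≤ n) (f : (Fin n → ℝ) × (Fin n → ℝ) → Fin n → ℝ)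
    (hf : ContDiff ℝ 1 f) (q₀ : Fin n → ℝ)
    (φ : (Fin n → ℝ) × ℝ → Fin n → ℝ) (hφ : ContDiff ℝ 2 φ)
    (hφ0 : ∀ u : Fin n → ℝ, φ (u, 0) = q₀)
    (hφv : ∀ u : Fin n → ℝ, deriv (fun t => φ (u, t)) 0 = u)
    (hφsol : ∀ (u : Fin n → ℝ) (t : ℝ),
      deriv (deriv (fun t => φ (u, t))) t = f (φ (u, t), deriv (fun t => φ (u, t)) t))
    (v : Fin n → ℝ) (t₁ : ℝ) (ht₁ : t₁ ≠ 0)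
    (c : ℝ → Fin n → ℝ) (hc : ∀ t : ℝ, c t = φ (v, t)) :
    (∃ J : ℝ → Fin n → ℝ,
        (∃ t : ℝ, J t ≠ 0) ∧
        (∀ t : ℝ, DifferentiableAt ℝ J t) ∧
        (∀ t : ℝ, DifferentiableAt ℝ (deriv J) t) ∧
        (∀ t : ℝ, deriv (deriv J) t =
          fderiv ℝ f (c t, deriv c t) (J t, 0) +
            fderiv ℝ f (c t, deriv c t) (0, deriv J t)) ∧
        J 0 = 0 ∧ J t₁ = 0) ↔
      ¬ Function.Injective (fderiv ℝ (fun u => φ (u, t₁)) v) := by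
  obtain rfl : c = fun t => φ (v, t) := funext hc
  set ψ : (Fin n → ℝ) × ℝ → Fin n → ℝ := fun p => fderiv ℝ φ p (0, 1)
  have hφd : ∀ u t, HasDerivAt (fun t => φ (u, t)) (ψ (u, t)) t := fun u t =>
    ((hφ.differentiable two_ne_zero) (u, t)).hasFDerivAt.comp_hasDerivAt t
      ((hasDerivAt_const t u).prodMk (hasDerivAt_id t))
  have hderiv : ∀ u, deriv (fun t => φ (u, t)) = fun t => ψ (u, t) :=
    fun u => funext fun t => (hφd u t).deriv
  have hφ1 : ContDiff ℝ 1 φ := hφ.of_le one_le_two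
  have hψ : ContDiff ℝ 1 ψ :=
    (hφ.fderiv_right (m := 1) (by norm_num)).clm_apply contDiff_const
  have hg : ContDiff ℝ 1 (fun p => f (φ p, ψ p)) := hf.comp (hφ1.prodMk hψ)
  -- The second-order equation only speaks of `deriv`; differentiability of `ψ` makes it a
  -- `HasDerivAt` statement.
  have hψd : ∀ u t, HasDerivAt (fun t => ψ (u, t)) (f (φ (u, t), ψ (u, t))) t := by
    intro u t
    have hdiff : DifferentiableAt ℝ (fun t => ψ (u, t)) t :=
      ((hψ.differentiable one_ne_zero).comp (by fun_prop : Differentiable ℝ fun t : ℝ => (u, t))) t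
    have := hφsol u t
    rw [hderiv u] at this
    exact this ▸ hdiff.hasDerivAt
  have hψ0 : ∀ u, ψ (u, 0) = u := fun u => by rw [← (hφd u 0).deriv, hφv u]
  have hspace : ∀ (k : (Fin n → ℝ) × ℝ → Fin n → ℝ), ContDiff ℝ 1 k → ∀ t w,
      fderiv ℝ (fun u => k (u, t)) v w = fderiv ℝ k (v, t) (w, 0) := by
    intro k hk t w
    have hpair : HasFDerivAt (fun u : Fin n → ℝ => (u, t))
        ((ContinuousLinearMap.id ℝ (Fin n → ℝ)).prod 0) v :=
      (hasFDerivAt_id v).prodMk (hasFDerivAt_const t v)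
    have : HasFDerivAt (fun u => k (u, t)) _ v :=
      ((hk.differentiable one_ne_zero) (v, t)).hasFDerivAt.comp v hpair
    exact congrArg (fun T => T w) this.fderiv
  let L : ℝ → ((Fin n → ℝ) × (Fin n → ℝ)) →L[ℝ] (Fin n → ℝ) :=
    fun t => fderiv ℝ f (φ (v, t), ψ (v, t))
  have hL : Continuous L := (hf.continuous_fderiv one_ne_zero).comp
    ((hφ1.continuous.comp (by fun_prop)).prodMk (hψ.continuous.comp (by fun_prop)))
  have hJ : ∀ w t, HasDerivAt (fun t => fderiv ℝ φ (v, t) (w, 0)) (fderiv ℝ ψ (v, t) (w, 0)) t :=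
    hasDerivAt_fderiv_apply_of_hasDerivAt hφ1 hψ hφd v
  have hJ' : ∀ w t, HasDerivAt (fun t => fderiv ℝ ψ (v, t) (w, 0))
      (L t (fderiv ℝ φ (v, t) (w, 0), fderiv ℝ ψ (v, t) (w, 0))) t := by
    intro w t
    have h1 := hasDerivAt_fderiv_apply_of_hasDerivAt hψ hg hψd v w t
    have h2 := ((hf.differentiable one_ne_zero) (φ (v, t), ψ (v, t))).hasFDerivAt.comp (v, t)
      (((hφ1.differentiable one_ne_zero) (v, t)).hasFDerivAt.prodMk
        ((hψ.differentiable one_ne_zero) (v, t)).hasFDerivAt)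
    have h3 : fderiv ℝ (fun p => f (φ p, ψ p)) (v, t) = _ := h2.fderiv
    rw [h3] at h1
    exact h1
  have hJ0 : ∀ w, fderiv ℝ φ (v, 0) (w, 0) = 0 := fun w => by
    rw [← hspace φ hφ1, funext hφ0]; simp
  have hJ'0 : ∀ w, fderiv ℝ ψ (v, 0) (w, 0) = w := fun w => by
    rw [← hspace ψ hψ, funext hψ0]; simp
  have hsplit : ∀ t (x y : Fin n → ℝ),
      fderiv ℝ f (φ (v, t), ψ (v, t)) (x, 0) + fderiv ℝ f (φ (v, t), ψ (v, t)) (0, y) =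
        L t (x, y) := fun t x y => by
    rw [← map_add]; simp [L]
  simp only [hderiv v, hsplit]
  rw [injective_iff_map_eq_zero]
  push Not
  constructor
  · rintro ⟨J, ⟨s, hs⟩, hd1, hd2, hode, h0, h1⟩
    -- `J` and the variation field in direction `J'(0)` have the same initial data.
    have hEq : ∀ t, J t = fderiv ℝ φ (v, t) (deriv J 0, 0) := fun t => by
      refine sub_eq_zero.mp (linear_secondOrder_eq_zero hL
        (P := fun t => J t - fderiv ℝ φ (v, t) (deriv J 0, 0))
        (Q := fun t => deriv J t - fderiv ℝ ψ (v, t) (deriv J 0, 0))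
        (fun t => (hd1 t).hasDerivAt.sub (hJ _ t)) (fun t => ?_) ?_ ?_ t)
      · have := (hd2 t).hasDerivAt.sub (hJ' (deriv J 0) t)
        rw [hode t, ← map_sub] at this
        exact this
      · simp [h0, hJ0]
      · simp [hJ'0]
    refine ⟨deriv J 0, ?_, fun hw => hs ?_⟩
    · rw [hspace φ hφ1, ← hEq, h1]
    · rw [hEq s, hw]
      exact map_zero _
  · rintro ⟨w, hw, hw0⟩
    have hdJ : deriv (fun t => fderiv ℝ φ (v, t) (w, 0)) = fun t => fderiv ℝ ψ (v, t) (w, 0) :=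
      funext fun t => (hJ w t).deriv
    refine ⟨fun t => fderiv ℝ φ (v, t) (w, 0), ?_, fun t => (hJ w t).differentiableAt, ?_, ?_,
      hJ0 w, ?_⟩
    · by_contra! hz
      have h1 := hJ w 0
      rw [funext hz, hJ'0] at h1
      exact hw0 (h1.unique (hasDerivAt_const _ _))
    · rw [hdJ]
      exact fun t => (hJ' w t).differentiableAt
    · rw [hdJ]
      exact fun t => (hJ' w t).deriv
    · exact (hspace φ hφ1 t₁ w).symm.trans hw
end
end

section
/- Let n ≥ 1, let A, Φ : ℝ → M_n(ℝ) be matrix-valued functions, let λ₀ > 0, and let V : ℝ → ℝⁿ be differentiable with V(t) ≠ 0, V'(t) = −A(t) V(t), and Φ(t) V(t) = λ₀ V(t) for all t ∈ ℝ. Define J(t) = sin(√λ₀ t) · V(t) and N(t) = J'(t) + A(t) J(t). Then N is differentiable and N'(t) + A(t) N(t) + Φ(t) J(t) = 0 for all t (i.e. J satisfies the Jacobi equation), J is not identically zero, and J(kπ/√λ₀) = 0 for every integer k, while J(0) = 0. -/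
/-!
For a parallel field `V` the Leibniz rule gives `∇(c V) = c' V` for every scalar function `c`: the
connection term `c A V` cancels the contribution of `V' = -A V`. This is `hasDerivAt_smul_parallel`.
Applied twice with `ω = √λ₀`, it turns `J = sin(ω t) V` into `N = ∇J = ω cos(ω t) V` and
`∇N = -ω² sin(ω t) V = -λ₀ J`, which equals `-Φ J` because `V` is an eigenvector field. No regularity
of `A` is needed, since `A` has dropped out of the closed form of `N`.
-/

open Real Matrix

noncomputable section

/-- Leibniz rule for a parallel field: `∇(c V) = c' V`, solved for the ordinary derivative. -/
lemma hasDerivAt_smul_parallel {n : ℕ} {A : ℝ → Matrix (Fin n) (Fin n) ℝ} {V : ℝ → Fin n → ℝ}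
    (hVdiff : ∀ t : ℝ, DifferentiableAt ℝ V t)
    (hVpar : ∀ t : ℝ, deriv V t = -(A t *ᵥ V t))
    {c : ℝ → ℝ} {c' t : ℝ} (hc : HasDerivAt c c' t) :
    HasDerivAt (fun s => c s • V s) (c' • V t - A t *ᵥ (c t • V t)) t := by
  have hV := (hVdiff t).hasDerivAt
  rw [hVpar] at hV
  refine (hc.smul hV).congr_deriv ?_
  rw [Matrix.mulVec_smul, smul_neg]
  abel

/-- Along a curve, if the Jacobi endomorphism `Φ(t)` has a constant positive eigenvalue
`λ₀` with a nonvanishing parallel eigenvector field `V` (i.e. `V' = −A V` and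
`Φ V = λ₀ V`), then `J(t) = sin(√λ₀ t) V(t)` is a nontrivial solution of the Jacobi
equation `∇∇J + ΦJ = 0` (with `∇W = W' + A W`) vanishing at the times `kπ/√λ₀`. -/
theorem parallel_eigenvector_gives_conjugate_points
    (n : ℕ) (hn : 1 ≤ n) (A Φ : ℝ → Matrix (Fin n) (Fin n) ℝ)
    (lam : ℝ) (hlam : 0 < lam) (V : ℝ → Fin n → ℝ)
    (hVne : ∀ t : ℝ, V t ≠ 0)
    (hVdiff : ∀ t : ℝ, DifferentiableAt ℝ V t)
    (hVpar : ∀ t : ℝ, deriv V t = -(A t *ᵥ V t))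
    (hVeig : ∀ t : ℝ, Φ t *ᵥ V t = lam • V t)
    (J N : ℝ → Fin n → ℝ)
    (hJ : ∀ t : ℝ, J t = Real.sin (Real.sqrt lam * t) • V t)
    (hN : ∀ t : ℝ, N t = deriv J t + A t *ᵥ J t) :
    (∀ t : ℝ, DifferentiableAt ℝ N t) ∧
    (∀ t : ℝ, deriv N t + A t *ᵥ N t + Φ t *ᵥ J t = 0) ∧
    (∃ t : ℝ, J t ≠ 0) ∧
    (∀ k : ℤ, J ((k : ℝ) * π / Real.sqrt lam) = 0) ∧
    J 0 = 0 := by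
  have hω : 0 < √lam := Real.sqrt_pos.2 hlam
  have hlin : ∀ t : ℝ, HasDerivAt (fun s : ℝ => √lam * s) (√lam) t := fun t => by
    simpa using (hasDerivAt_id t).const_mul (√lam)
  have hJfun : J = fun t => Real.sin (√lam * t) • V t := funext hJ
  have hNfun : N = fun t => (Real.cos (√lam * t) * √lam) • V t := by
    funext t
    rw [hN, hJfun, (hasDerivAt_smul_parallel hVdiff hVpar (hlin t).sin).deriv, sub_add_cancel]
  have hNderiv : ∀ t : ℝ, HasDerivAt N (-(lam • J t) - A t *ᵥ N t) t := fun t => by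
    have h := hasDerivAt_smul_parallel hVdiff hVpar ((hlin t).cos.mul_const (√lam))
    rw [hNfun]
    convert h using 2
    rw [hJ, smul_smul, ← neg_smul]
    congr 1
    linear_combination Real.sin (√lam * t) * Real.mul_self_sqrt hlam.le
  refine ⟨fun t => (hNderiv t).differentiableAt, fun t => ?_, ⟨π / 2 / √lam, ?_⟩, fun k => ?_, ?_⟩
  · have hΦJ : Φ t *ᵥ J t = lam • J t := by
      rw [hJ, Matrix.mulVec_smul, hVeig, smul_comm]
    rw [(hNderiv t).deriv, hΦJ]
    abel
  · -- a quarter period after `0` the sine equals `1`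
    rw [hJ, mul_div_cancel₀ _ hω.ne', Real.sin_pi_div_two, one_smul]
    exact hVne _
  · rw [hJ, mul_div_cancel₀ _ hω.ne', Real.sin_int_mul_pi, zero_smul]
  · simp [hJ]
end
end

section
/- Let K be a field and d : K → K an additive map satisfying d(ab) = d(a)b + a d(b) for all a, b ∈ K. Let V be a K-vector space, let Φ : V → V be a K-linear endomorphism that is diagonalizable (V is the internal direct sum of the eigenspaces of Φ), and let ∇ : V → V be an additive map satisfying ∇(a·x) = a·∇x + d(a)·x for all a ∈ K, x ∈ V. Let λ ∈ K be an eigenvalue of Φ with eigenspace E_λ = ker(Φ − λ·id), and define ∇Φ : V → V by (∇Φ)(x) = ∇(Φx) − Φ(∇x). Then the following are equivalent: (1) (∇Φ)(Φx) = Φ((∇Φ)(x)) for all x ∈ E_λ; (2) (∇Φ)(E_λ) ⊆ E_λ; (3) ∇(E_λ) ⊆ E_λ. -/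
/-!
On `E_λ` the twisted Leibniz rule gives `(∇Φ)x = d(λ) • x - (Φ - λ)(∇x)`, and `∇Φ` is `K`-linear
because the `d`-terms cancel. By linearity, `(∇Φ)(Φx) = λ (∇Φ)x` on `E_λ`, so commuting with `Φ`
at `x` says exactly that `(∇Φ)x ∈ E_λ`. By the formula, `(∇Φ)x ∈ E_λ` holds iff
`(Φ - λ)² (∇x) = 0`; since `Φ` is diagonalizable, `(Φ - λ)²` and `Φ - λ` have the same kernel
(`apply_eq_zero_of_apply_apply_eq_zero`), so this says that `∇x ∈ E_λ`.
-/

noncomputable section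

/-- A diagonalizable endomorphism has no generalized eigenvectors of rank two: the range of
`Φ - λ` lies in the sum of the other eigenspaces, which meets `E_λ` trivially. -/
theorem apply_eq_zero_of_apply_apply_eq_zero
    {K V : Type*} [Field K] [AddCommGroup V] [Module K V] (Φ : V →ₗ[K] V)
    (hindep : iSupIndep fun μ : K => LinearMap.ker (Φ - μ • (LinearMap.id : V →ₗ[K] V)))
    (htop : (⨆ μ : K, LinearMap.ker (Φ - μ • (LinearMap.id : V →ₗ[K] V))) = ⊤)
    (lam : K) (y : V)
    (hy : (Φ - lam • (LinearMap.id : V →ₗ[K] V))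
      ((Φ - lam • (LinearMap.id : V →ₗ[K] V)) y) = 0) :
    (Φ - lam • (LinearMap.id : V →ₗ[K] V)) y = 0 := by
  have hrange : LinearMap.range (Φ - lam • (LinearMap.id : V →ₗ[K] V)) ≤
      ⨆ μ : K, ⨆ _ : μ ≠ lam, LinearMap.ker (Φ - μ • (LinearMap.id : V →ₗ[K] V)) := by
    rw [LinearMap.range_eq_map, ← htop, Submodule.map_iSup]
    refine iSup_le fun μ => ?_
    rintro _ ⟨z, hz, rfl⟩
    have hz' : Φ z = μ • z := by simpa [sub_eq_zero] using hz
    by_cases hμ : μ = lam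
    · simp [hz', hμ]
    · refine Submodule.mem_iSup_of_mem μ (Submodule.mem_iSup_of_mem hμ ?_)
      simp [hz', smul_comm lam μ, smul_sub]
  exact Submodule.disjoint_def.mp (hindep lam) _ hy (hrange ⟨y, rfl⟩)

/-- Algebraic form of the proposition on invariance of eigendistributions: let `Φ` be a
diagonalizable endomorphism of a `K`-vector space `V`, `d` a derivation of `K`, and `∇`
an additive operator on `V` with `∇(a • x) = a • ∇x + d(a) • x`.  For an eigenvalue `λ`
of `Φ` with eigenspace `E_λ = ker(Φ − λ·id)` and `(∇Φ)(x) = ∇(Φx) − Φ(∇x)`, the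
following are equivalent: `[∇Φ,Φ](E_λ) = 0`, `∇Φ(E_λ) ⊆ E_λ`, and `∇(E_λ) ⊆ E_λ`. -/
theorem invariant_eigendistribution_tfae
    (K : Type*) [Field K] (V : Type*) [AddCommGroup V] [Module K V]
    (d : K → K)
    (dadd : ∀ a b : K, d (a + b) = d a + d b)
    (dleib : ∀ a b : K, d (a * b) = d a * b + a * d b)
    (Φ : V →ₗ[K] V)
    (hdiag_indep : iSupIndep fun μ : K =>
      LinearMap.ker (Φ - μ • (LinearMap.id : V →ₗ[K] V)))
    (hdiag_top : (⨆ μ : K,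
      LinearMap.ker (Φ - μ • (LinearMap.id : V →ₗ[K] V))) = ⊤)
    (N : V → V)
    (Nadd : ∀ x y : V, N (x + y) = N x + N y)
    (Nsmul : ∀ (a : K) (x : V), N (a • x) = a • N x + d a • x)
    (lam : K)
    (hlam : LinearMap.ker (Φ - lam • (LinearMap.id : V →ₗ[K] V)) ≠ ⊥) :
    ((∀ x ∈ LinearMap.ker (Φ - lam • (LinearMap.id : V →ₗ[K] V)),
        N (Φ (Φ x)) - Φ (N (Φ x)) = Φ (N (Φ x) - Φ (N x))) ↔
      (∀ x ∈ LinearMap.ker (Φ - lam • (LinearMap.id : V →ₗ[K] V)),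
        N (Φ x) - Φ (N x) ∈
          LinearMap.ker (Φ - lam • (LinearMap.id : V →ₗ[K] V)))) ∧
    ((∀ x ∈ LinearMap.ker (Φ - lam • (LinearMap.id : V →ₗ[K] V)),
        N (Φ x) - Φ (N x) ∈
          LinearMap.ker (Φ - lam • (LinearMap.id : V →ₗ[K] V))) ↔
      (∀ x ∈ LinearMap.ker (Φ - lam • (LinearMap.id : V →ₗ[K] V)),
        N x ∈ LinearMap.ker (Φ - lam • (LinearMap.id : V →ₗ[K] V)))) := by
  have mem_iff : ∀ x : V, x ∈ LinearMap.ker (Φ - lam • (LinearMap.id : V →ₗ[K] V)) ↔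
      Φ x = lam • x := fun x => by simp [sub_eq_zero]
  refine ⟨forall₂_congr fun x hx => ?_, forall₂_congr fun x hx => ?_⟩
  · rw [mem_iff] at hx ⊢
    have h : N (Φ (Φ x)) - Φ (N (Φ x)) = lam • (N (Φ x) - Φ (N x)) := by
      simp only [hx, map_smul, Nsmul, map_add]
      module
    rw [h, eq_comm]
  · have hx' := (mem_iff x).mp hx
    have h : N (Φ x) - Φ (N x) =
        d lam • x - (Φ - lam • (LinearMap.id : V →ₗ[K] V)) (N x) := by
      simp only [hx', Nsmul, LinearMap.sub_apply, LinearMap.smul_apply, LinearMap.id_apply]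
      module
    rw [h, Submodule.sub_mem_iff_right _ (Submodule.smul_mem _ _ hx)]
    simp only [LinearMap.mem_ker]
    exact ⟨apply_eq_zero_of_apply_apply_eq_zero Φ hdiag_indep hdiag_top lam (N x),
      fun h0 => by rw [h0, map_zero]⟩
end
end

section
/- Let K be a field and d : K → K an additive map satisfying d(ab) = d(a)b + a d(b) for all a, b ∈ K. Let V be a K-vector space, Φ : V → V a K-linear endomorphism, λ ∈ K, E_λ = ker(Φ − λ·id), and let ∇ : V → V be an additive map satisfying ∇(a·x) = a·∇x + d(a)·x for all a ∈ K, x ∈ V, such that ∇(E_λ) ⊆ E_λ. Define ∇Φ : V → V by (∇Φ)(x) = ∇(Φx) − Φ(∇x). Then (∇Φ)(Y) = d(λ)·Y for every Y ∈ E_λ; consequently, if E_λ ≠ {0}, then ∇Φ vanishes on E_λ if and only if d(λ) = 0. -/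
noncomputable section

/-- Algebraic form of the proposition: if the eigenspace `E_λ = ker(Φ − λ·id)` is
invariant under the covariant derivative `∇` (an additive map with
`∇(a • x) = a • ∇x + d(a) • x` for a derivation `d` of `K`), then
`(∇Φ)(Y) = d(λ) • Y` for every `Y ∈ E_λ`; consequently, if `E_λ ≠ 0`, then `∇Φ`
vanishes on `E_λ` if and only if `d(λ) = 0` (λ is a first integral). -/
theorem nablaPhi_on_eigenspace_eq_dlam_smul
    (K : Type*) [Field K] (V : Type*) [AddCommGroup V] [Module K V]
    (d : K → K)
    (dadd : ∀ a b : K, d (a + b) = d a + d b)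
    (dleib : ∀ a b : K, d (a * b) = d a * b + a * d b)
    (Φ : V →ₗ[K] V) (lam : K)
    (N : V → V)
    (Nadd : ∀ x y : V, N (x + y) = N x + N y)
    (Nsmul : ∀ (a : K) (x : V), N (a • x) = a • N x + d a • x)
    (hinv : ∀ x ∈ LinearMap.ker (Φ - lam • (LinearMap.id : V →ₗ[K] V)),
      N x ∈ LinearMap.ker (Φ - lam • (LinearMap.id : V →ₗ[K] V))) :
    (∀ Y ∈ LinearMap.ker (Φ - lam • (LinearMap.id : V →ₗ[K] V)),
      N (Φ Y) - Φ (N Y) = d lam • Y) ∧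
    (LinearMap.ker (Φ - lam • (LinearMap.id : V →ₗ[K] V)) ≠ ⊥ →
      ((∀ Y ∈ LinearMap.ker (Φ - lam • (LinearMap.id : V →ₗ[K] V)),
          N (Φ Y) - Φ (N Y) = 0) ↔ d lam = 0)) := by
  have mem : ∀ x, x ∈ LinearMap.ker (Φ - lam • (LinearMap.id : V →ₗ[K] V)) ↔ Φ x = lam • x := by
    intro x
    simp [sub_eq_zero]
  -- On `E_λ`, `∇(ΦY) = ∇(λY) = λ∇Y + d(λ)Y`, and `Φ(∇Y) = λ∇Y` by invariance of `E_λ`.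
  have key : ∀ Y ∈ LinearMap.ker (Φ - lam • (LinearMap.id : V →ₗ[K] V)),
      N (Φ Y) - Φ (N Y) = d lam • Y := by
    intro Y hY
    rw [(mem _).1 (hinv Y hY), (mem Y).1 hY, Nsmul, add_sub_cancel_left]
  refine ⟨key, fun hne => ⟨fun h => ?_, fun h Y hY => by rw [key Y hY, h, zero_smul]⟩⟩
  obtain ⟨Y, hY, hY0⟩ := Submodule.exists_mem_ne_zero_of_ne_bot hne
  exact (smul_eq_zero.1 ((key Y hY).symm.trans (h Y hY))).resolve_right hY0
end
end

section
/- Let n ≥ 1, let A : ℝ → M_n(ℝ) be continuous, let Φ : ℝ → M_n(ℝ) be differentiable with Φ'(t) = Φ(t) A(t) − A(t) Φ(t) for all t ∈ ℝ, let V : ℝ → ℝⁿ be differentiable with V'(t) = −A(t) V(t) for all t, and let λ₀ ∈ ℝ satisfy Φ(0) V(0) = λ₀ V(0). Then Φ(t) V(t) = λ₀ V(t) for all t ∈ ℝ. -/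
/-!
By the product rule, `W = Φ V` satisfies `W' = (ΦA − AΦ) V − Φ A V = −A W`, so `W` is again a
parallel vector field, and so is `lam • V`. Both solve the same linear ODE and agree at `0`. Since
`A` is continuous, it is bounded on compact intervals, so this ODE is Lipschitz there and its
solutions are determined by their value at `0` (`parallel_unique`).
-/

open Matrix

noncomputable section

section

attribute [local instance] Matrix.linftyOpNormedAddCommGroup

/-- The linear ODE is Lipschitz in the space variable, with a constant uniform in time on compact
intervals; the constant comes from the `ℓ^∞` operator norm, which is compatible with the sup norm
carried by `Fin n → ℝ`. -/
lemma parallel_lipschitz {n : ℕ} {A : ℝ → Matrix (Fin n) (Fin n) ℝ} (hA : Continuous A)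
    (a b : ℝ) :
    ∃ K : NNReal, ∀ t ∈ Set.Icc a b, LipschitzWith K (fun x : Fin n → ℝ => -(A t *ᵥ x)) := by
  obtain ⟨C, hC⟩ := isCompact_Icc.exists_bound_of_continuousOn (s := Set.Icc a b) hA.continuousOn
  refine ⟨C.toNNReal, fun t ht => LipschitzWith.of_dist_le_mul fun x y => ?_⟩
  rw [dist_neg_neg, dist_eq_norm, dist_eq_norm, ← Matrix.mulVec_sub]
  calc ‖A t *ᵥ (x - y)‖ ≤ ‖A t‖ * ‖x - y‖ := Matrix.linfty_opNorm_mulVec _ _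
    _ ≤ C.toNNReal * ‖x - y‖ := by
      gcongr
      exact (hC t ht).trans (Real.le_coe_toNNReal C)

end

/-- A parallel vector field along the curve is determined by its value at time `0`. -/
lemma parallel_unique {n : ℕ} {A : ℝ → Matrix (Fin n) (Fin n) ℝ} (hA : Continuous A)
    {V W : ℝ → Fin n → ℝ} (hV : ∀ t, HasDerivAt V (-(A t *ᵥ V t)) t)
    (hW : ∀ t, HasDerivAt W (-(A t *ᵥ W t)) t) (h0 : V 0 = W 0) (t : ℝ) : V t = W t := by
  obtain ⟨K, hK⟩ := parallel_lipschitz hA (-(|t| + 1)) (|t| + 1)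
  have h0mem : (0 : ℝ) ∈ Set.Ioo (-(|t| + 1)) (|t| + 1) := by
    constructor <;> linarith [abs_nonneg t]
  have htmem : t ∈ Set.Ioo (-(|t| + 1)) (|t| + 1) := by
    constructor <;> linarith [neg_abs_le t, le_abs_self t]
  exact ODE_solution_unique_of_mem_Ioo (v := fun t x => -(A t *ᵥ x)) (s := fun _ => Set.univ)
    (fun s hs => (hK s (Set.Ioo_subset_Icc_self hs)).lipschitzOnWith) h0mem
    (fun s _ => ⟨hV s, Set.mem_univ _⟩) (fun s _ => ⟨hW s, Set.mem_univ _⟩) h0 htmem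

/-- The product rule for a matrix function, differentiated entrywise, acting on a vector
function. -/
lemma hasDerivAt_mulVec {n : ℕ} {M : ℝ → Matrix (Fin n) (Fin n) ℝ}
    {M' : Matrix (Fin n) (Fin n) ℝ} {V : ℝ → Fin n → ℝ} {V' : Fin n → ℝ} {t : ℝ}
    (hM : ∀ i j, HasDerivAt (fun s => M s i j) (M' i j) t) (hV : HasDerivAt V V' t) :
    HasDerivAt (fun s => M s *ᵥ V s) (M' *ᵥ V t + M t *ᵥ V') t := by
  refine hasDerivAt_pi.2 fun i => ?_
  have h := HasDerivAt.fun_sum (u := Finset.univ) fun j _ =>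
    (hM i j).fun_mul (hasDerivAt_pi.1 hV j)
  simpa only [Pi.add_apply, Matrix.mulVec, dotProduct, Finset.sum_add_distrib] using h

/-- Propagation of eigenvectors along a curve for a locally symmetric SODE: if the
Jacobi endomorphism `Φ(t)` satisfies `Φ' = ΦA − AΦ` (i.e. `∇Φ = 0` along the curve)
and `V` is a parallel vector field (`V' = −A V`) whose initial value is an eigenvector
of `Φ(0)` with eigenvalue `λ₀`, then `Φ(t) V(t) = λ₀ V(t)` for all `t`. -/
theorem parallel_eigenvector_propagation
    (n : ℕ) (hn : 1 ≤ n) (A : ℝ → Matrix (Fin n) (Fin n) ℝ) (hA : Continuous A)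
    (Φ : ℝ → Matrix (Fin n) (Fin n) ℝ)
    (hΦ : ∀ (t : ℝ) (i j : Fin n),
      HasDerivAt (fun s => Φ s i j) ((Φ t * A t - A t * Φ t) i j) t)
    (V : ℝ → Fin n → ℝ)
    (hV : ∀ t : ℝ, HasDerivAt V (-(A t *ᵥ V t)) t)
    (lam : ℝ) (h0 : Φ 0 *ᵥ V 0 = lam • V 0) :
    ∀ t : ℝ, Φ t *ᵥ V t = lam • V t := by
  have hW : ∀ t, HasDerivAt (fun s => Φ s *ᵥ V s) (-(A t *ᵥ (Φ t *ᵥ V t))) t := by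
    intro t
    convert hasDerivAt_mulVec (hΦ t) (hV t) using 1
    simp only [Matrix.sub_mulVec, Matrix.mulVec_neg, Matrix.mulVec_mulVec]
    abel
  have hlam : ∀ t, HasDerivAt (fun s => lam • V s) (-(A t *ᵥ (lam • V t))) t := by
    intro t
    simpa only [Matrix.mulVec_smul, smul_neg] using (hV t).fun_const_smul lam
  exact parallel_unique hA hW hlam h0
end
end

section
/- For each s ∈ ℝ define c_s : ℝ → ℝ² by c_s(t) = (s sin t, t − (1/2) s² sin² t), and write c_s(t) = (x_s(t), y_s(t)). Then for all s, t ∈ ℝ: x_s''(t) = −x_s(t) and y_s''(t) = (y_s'(t) + x_s(t) x_s'(t))³ − x_s'(t)² + x_s(t)² − 1. Moreover c_s(0) = (0,0) and c_s(π) = (0, π) for every s ∈ ℝ. -/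
/-!
Direct computation: `ẋ = s cos t` and `ẏ = 1 - s² sin t cos t`, so `ẏ + xẋ = 1` identically and
the second equation reduces to `ÿ = x² - ẋ²`, which is the derivative of `ẏ`.
-/

open Real

noncomputable section

/-- The curves `c_s(t) = (s sin t, t − (1/2) s² sin² t)` form a 1-parameter family of
solutions of the system `ẍ = −x`, `ÿ = (ẏ + xẋ)³ − ẋ² + x² − 1`, all passing through
`(0,0)` at `t = 0` and through `(0,π)` at `t = π`. -/
theorem worked_example_family_of_solutions
    (x y : ℝ → ℝ → ℝ)
    (hx : ∀ s t : ℝ, x s t = s * Real.sin t)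
    (hy : ∀ s t : ℝ, y s t = t - (1/2) * s^2 * (Real.sin t)^2) :
    ∀ s t : ℝ,
      (deriv (deriv (x s)) t = -(x s t)) ∧
      (deriv (deriv (y s)) t =
        (deriv (y s) t + x s t * deriv (x s) t)^3
          - (deriv (x s) t)^2 + (x s t)^2 - 1) ∧
      (x s 0 = 0 ∧ y s 0 = 0) ∧
      (x s π = 0 ∧ y s π = π) := by
  intro s t
  have hxs : x s = fun t => s * Real.sin t := funext (hx s)
  have hys : y s = fun t => t - (1/2) * s^2 * (Real.sin t)^2 := funext (hy s)
  have dx : deriv (x s) = fun t => s * Real.cos t := by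
    funext u
    rw [hxs]
    exact ((Real.hasDerivAt_sin u).const_mul s).deriv
  have dy : deriv (y s) = fun t => 1 - s^2 * (Real.sin t * Real.cos t) := by
    funext u
    rw [hys]
    refine HasDerivAt.deriv (HasDerivAt.congr_deriv ((hasDerivAt_id u).sub
      (((Real.hasDerivAt_sin u).pow 2).const_mul ((1/2) * s^2))) ?_)
    norm_num
    ring
  have ddx : deriv (deriv (x s)) t = -(s * Real.sin t) := by
    rw [dx, ((Real.hasDerivAt_cos t).const_mul s).deriv]
    ring
  have ddy : deriv (deriv (y s)) t = -(s * Real.cos t)^2 + (s * Real.sin t)^2 := by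
    rw [dy]
    refine HasDerivAt.deriv (HasDerivAt.congr_deriv
      ((((Real.hasDerivAt_sin t).mul (Real.hasDerivAt_cos t)).const_mul
        (s^2)).const_sub 1) ?_)
    ring
  refine ⟨by rw [ddx, hx], ?_, by simp [hx, hy], by simp [hx, hy]⟩
  -- The cubed quantity `ẏ + xẋ` is identically `1` along each curve.
  rw [ddy, dx, dy, hx]
  ring
end
end

section
/- Let f : ℝ² × ℝ² → ℝ² be given by f((x,y),(u,v)) = (−x, (v + xu)³ − u² + x² − 1). Then c(t) = (0, t) satisfies c''(t) = f(c(t), c'(t)) for all t, and J(t) = (sin t, 0) is a not-identically-zero solution of the variational equation J''(t) = D_q f(c(t), c'(t)) J(t) + D_v f(c(t), c'(t)) J'(t) with J(0) = 0 and J(π) = 0. Hence (0, π) is a conjugate point of (0,0) along c. -/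
/-!
Along `c(t) = (0, t)` the system is evaluated at `x = u = 0`, `v = 1`. Every term of the second
component involving a variation of `x` or `u` carries a factor `x` or `u`, so there the derivative
of the right-hand side is `(ξ, η, ξ', η') ↦ (-ξ, 3 η')`. The variational equation along `c` is
therefore `ξ'' = -ξ`, `η'' = 3 η'`, which is solved by `(sin t, 0)`.
-/

open Real

noncomputable section

/-- The total derivative of the right-hand side at the state `((0, t), (0, 1))` of the relative
equilibrium, applied to a variation `p` of position and velocity. -/
lemma fderiv_rhs_along
    (f : (ℝ × ℝ) × (ℝ × ℝ) → ℝ × ℝ)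
    (hf : ∀ x y u v : ℝ, f ((x, y), (u, v)) = (-x, (v + x * u)^3 - u^2 + x^2 - 1))
    (t : ℝ) (p : (ℝ × ℝ) × (ℝ × ℝ)) :
    fderiv ℝ f ((0, t), (0, 1)) p = (-p.1.1, 3 * p.2.2) := by
  have hf' : f = fun p => (-p.1.1, (p.2.2 + p.1.1 * p.2.1)^3 - p.2.1^2 + p.1.1^2 - 1) := by
    funext ⟨⟨x, y⟩, ⟨u, v⟩⟩
    exact hf x y u v
  have hx : HasFDerivAt (fun p : (ℝ × ℝ) × (ℝ × ℝ) => p.1.1) _ ((0, t), (0, 1)) :=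
    (hasFDerivAt_fst (𝕜 := ℝ)).fst
  have hu : HasFDerivAt (fun p : (ℝ × ℝ) × (ℝ × ℝ) => p.2.1) _ ((0, t), (0, 1)) :=
    (hasFDerivAt_snd (𝕜 := ℝ)).fst
  have hv : HasFDerivAt (fun p : (ℝ × ℝ) × (ℝ × ℝ) => p.2.2) _ ((0, t), (0, 1)) :=
    (hasFDerivAt_snd (𝕜 := ℝ)).snd
  have hw := hv.fun_add (hx.fun_mul hu)
  have h := hx.fun_neg.prodMk
    ((((hw.pow 3).fun_sub (hu.pow 2)).fun_add
      (hx.pow 2)).sub_const 1)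
  rw [hf', h.fderiv]
  ext <;> simp

/-- For the system `ẍ = −x`, `ÿ = (ẏ + xẋ)³ − ẋ² + x² − 1` on ℝ², the curve
`c(t) = (0,t)` is a solution and `J(t) = (sin t, 0)` is a not-identically-zero Jacobi
field along `c` vanishing at `t = 0` and `t = π`; hence `(0,π)` is a conjugate point of
`(0,0)` along `c`. -/
theorem worked_example_conjugate_point
    (f : (ℝ × ℝ) × (ℝ × ℝ) → ℝ × ℝ)
    (hf : ∀ x y u v : ℝ, f ((x, y), (u, v)) = (-x, (v + x * u)^3 - u^2 + x^2 - 1))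
    (c J : ℝ → ℝ × ℝ)
    (hc : ∀ t : ℝ, c t = (0, t))
    (hJ : ∀ t : ℝ, J t = (Real.sin t, 0)) :
    (∀ t : ℝ, deriv (deriv c) t = f (c t, deriv c t)) ∧
    (∃ t : ℝ, J t ≠ 0) ∧
    (∀ t : ℝ, deriv (deriv J) t =
      fderiv ℝ f (c t, deriv c t) (J t, 0) +
        fderiv ℝ f (c t, deriv c t) (0, deriv J t)) ∧
    J 0 = 0 ∧ J π = 0 := by
  have hc1 : deriv c = fun _ => ((0 : ℝ), (1 : ℝ)) := by
    funext t
    rw [funext hc]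
    exact ((hasDerivAt_const t (0 : ℝ)).prodMk (hasDerivAt_id t)).deriv
  have hJ1 : deriv J = fun t => (Real.cos t, (0 : ℝ)) := by
    funext t
    rw [funext hJ]
    exact ((Real.hasDerivAt_sin t).prodMk (hasDerivAt_const t (0 : ℝ))).deriv
  have hJ2 (t : ℝ) : deriv (deriv J) t = (-Real.sin t, (0 : ℝ)) := by
    rw [hJ1]
    exact ((Real.hasDerivAt_cos t).prodMk (hasDerivAt_const t (0 : ℝ))).deriv
  refine ⟨fun t => ?_, ⟨π / 2, ?_⟩, fun t => ?_, ?_, ?_⟩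
  · simp [hc1, hc, hf, Prod.ext_iff]
  · simp [hJ]
  · rw [hJ2, hc1, hc, fderiv_rhs_along f hf, fderiv_rhs_along f hf, hJ1, hJ]
    simp
  · simp [hJ]
  · simp [hJ]
end
end

section
/- Let (a,b,c) ∈ ℝ³ with c ≠ 0 and define x(t) = (a/c) sin(ct) − (b/c) cos(ct) + b/c, y(t) = (a/c) cos(ct) + (b/c) sin(ct) − a/c, z(t) = ct. Then (x,y,z) satisfies x''(t) = y'(t) z'(t), y''(t) = −x'(t) z'(t), z''(t) = 0 for all t, with (x(0), y(0), z(0)) = (0,0,0) and (x'(0), y'(0), z'(0)) = (a,b,c). Moreover (x(2π/c), y(2π/c), z(2π/c)) = (0, 0, 2π), independently of a and b. -/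
/-!
With `u = a cos(ct) + b sin(ct)` and `v = -a sin(ct) + b cos(ct)`, the curve has velocity
`(ẋ, ẏ, ż) = (u, v, c)`, and `(u, v)` rotates at constant angular speed: `u̇ = c v`, `v̇ = -c u`.
These are the geodesic equations. At time `2π/c` the angle `ct` is one full turn, so `x` and `y`
return to their initial values, whatever `a` and `b` are. All derivatives are instances of
`hasDerivAt_trig`.
-/

open Real

noncomputable section

theorem hasDerivAt_trig (A B D c t : ℝ) :
    HasDerivAt (fun s : ℝ => A * Real.sin (c * s) + B * Real.cos (c * s) + D)
      (c * (A * Real.cos (c * t) - B * Real.sin (c * t))) t := by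
  have h : HasDerivAt (fun s : ℝ => c * s) c t := by
    simpa using (hasDerivAt_id t).const_mul c
  refine (((h.sin.const_mul A).add (h.cos.const_mul B)).add_const D).congr_deriv ?_
  ring

/-- The geodesics of the canonical connection on SE(2) through the identity: for
initial velocity `(a,b,c)` with `c ≠ 0`, the curve
`x(t) = (a/c) sin(ct) − (b/c) cos(ct) + b/c`, `y(t) = (a/c) cos(ct) + (b/c) sin(ct) − a/c`,
`z(t) = ct` solves `ẍ = ẏż`, `ÿ = −ẋż`, `z̈ = 0` with the given initial data, and it
passes through `(0,0,2π)` at time `2π/c`, independently of `a` and `b`. -/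
theorem se2_geodesics_meet_at_conjugate_point
    (a b c : ℝ) (hc : c ≠ 0) (x y z : ℝ → ℝ)
    (hx : ∀ t : ℝ, x t = (a / c) * Real.sin (c * t) - (b / c) * Real.cos (c * t) + b / c)
    (hy : ∀ t : ℝ, y t = (a / c) * Real.cos (c * t) + (b / c) * Real.sin (c * t) - a / c)
    (hz : ∀ t : ℝ, z t = c * t) :
    (∀ t : ℝ, deriv (deriv x) t = deriv y t * deriv z t) ∧
    (∀ t : ℝ, deriv (deriv y) t = -(deriv x t * deriv z t)) ∧
    (∀ t : ℝ, deriv (deriv z) t = 0) ∧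
    (x 0 = 0 ∧ y 0 = 0 ∧ z 0 = 0) ∧
    (deriv x 0 = a ∧ deriv y 0 = b ∧ deriv z 0 = c) ∧
    (x (2 * π / c) = 0 ∧ y (2 * π / c) = 0 ∧ z (2 * π / c) = 2 * π) := by
  have dx : deriv x = fun t => b * Real.sin (c * t) + a * Real.cos (c * t) + 0 := by
    funext t
    have e : x = fun s => (a / c) * Real.sin (c * s) + (-(b / c)) * Real.cos (c * s) + b / c := by
      funext s
      rw [hx]
      ring
    rw [e, (hasDerivAt_trig _ _ _ c t).deriv]
    field_simp
    ring
  have dy : deriv y = fun t => (-a) * Real.sin (c * t) + b * Real.cos (c * t) + 0 := by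
    funext t
    have e : y = fun s => (b / c) * Real.sin (c * s) + (a / c) * Real.cos (c * s) + -(a / c) := by
      funext s
      rw [hy]
      ring
    rw [e, (hasDerivAt_trig _ _ _ c t).deriv]
    field_simp
    ring
  have dz : deriv z = fun _ => c := by
    funext t
    rw [funext hz]
    simp
  have period : c * (2 * π / c) = 2 * π := by field_simp
  refine ⟨fun t => ?_, fun t => ?_, fun t => ?_, ?_, ?_, ?_⟩
  · rw [dx, (hasDerivAt_trig _ _ _ c t).deriv, dy, dz]
    ring
  · rw [dy, (hasDerivAt_trig _ _ _ c t).deriv, dx, dz]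
    ring
  · rw [dz]
    simp
  · simp [hx, hy, hz]
  · simp [dx, dy, dz]
  · simp [hx, hy, hz, period]
end
end

section
/- Fix t ∈ ℝ and define F_t on the open set {(a,b,c) ∈ ℝ³ : c ≠ 0} by F_t(a,b,c) = ((a/c) sin(ct) − (b/c) cos(ct) + b/c, (a/c) cos(ct) + (b/c) sin(ct) − a/c, ct). Then F_t is differentiable at every point of its domain and the determinant of its derivative at (a,b,c) equals 2t(1 − cos(ct))/c². In particular, the derivative of F_t at (a,b,c) fails to be invertible if and only if t = 0 or ct ∈ 2πℤ. -/
open Real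

noncomputable section

/-!
In the variables `(a, b, c)` the first two components of `F` are linear in `(a, b)` and the third
depends on `c` alone, so the Jacobian matrix is block upper triangular with diagonal blocks
`c⁻¹ • !![sin (ct), 1 - cos (ct); cos (ct) - 1, sin (ct)]` and `t`. Its determinant is
`t (sin² (ct) + (1 - cos (ct))²) / c² = 2 t (1 - cos (ct)) / c²`, which vanishes exactly when `t = 0`
or `cos (ct) = 1`. The `c`-derivatives of the first two components do not contribute
(`det_of_block_triangular`).
-/

/-- The product `ℝ × ℝ × ℝ` in coordinates indexed by `Fin 3`. -/
def tripleEquiv : (ℝ × ℝ × ℝ) ≃ₗ[ℝ] (Fin 3 → ℝ) where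
  toFun v := ![v.1, v.2.1, v.2.2]
  invFun w := (w 0, w 1, w 2)
  map_add' v w := by ext i; fin_cases i <;> rfl
  map_smul' r v := by ext i; fin_cases i <;> rfl
  left_inv v := rfl
  right_inv w := by ext i; fin_cases i <;> rfl

lemma tripleEquiv_apply (x y z : ℝ) : tripleEquiv (x, y, z) = ![x, y, z] := rfl

lemma tripleEquiv_symm_apply (w : Fin 3 → ℝ) : tripleEquiv.symm w = (w 0, w 1, w 2) := rfl

/-- The entries `u` and `v` above the diagonal block `t` drop out of the determinant. -/
lemma det_of_block_triangular (f : ℝ × ℝ × ℝ →ₗ[ℝ] ℝ × ℝ × ℝ) (p q r s u v t : ℝ)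
    (hf : ∀ x y z : ℝ, f (x, y, z) = (p * x + q * y + u * z, r * x + s * y + v * z, t * z)) :
    LinearMap.det f = t * (p * s - q * r) := by
  rw [← LinearMap.det_toMatrix (Module.Basis.ofEquivFun tripleEquiv), Matrix.det_fin_three]
  simp [LinearMap.toMatrix_apply, tripleEquiv_apply, tripleEquiv_symm_apply, hf]
  ring

lemma bijective_iff_det_ne_zero (f : ℝ × ℝ × ℝ →ₗ[ℝ] ℝ × ℝ × ℝ) :
    Function.Bijective f ↔ LinearMap.det f ≠ 0 := by
  rw [← Module.End.isUnit_iff, LinearMap.isUnit_iff_isUnit_det, isUnit_iff_ne_zero]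

/-- The exponential map of the canonical connection on SE(2) at time `t`:
`F_t(a,b,c) = ((a/c) sin(ct) − (b/c) cos(ct) + b/c, (a/c) cos(ct) + (b/c) sin(ct) − a/c, ct)`
on the open set `{c ≠ 0}` is differentiable, the determinant of its derivative equals
`2t(1 − cos(ct))/c²`, and the derivative fails to be invertible exactly when `t = 0` or
`ct ∈ 2πℤ`. -/
theorem se2_exponential_map_jacobian
    (t : ℝ) (F : ℝ × ℝ × ℝ → ℝ × ℝ × ℝ)
    (hF : ∀ a b c : ℝ, c ≠ 0 → F (a, b, c) =
      ((a / c) * Real.sin (c * t) - (b / c) * Real.cos (c * t) + b / c,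
       (a / c) * Real.cos (c * t) + (b / c) * Real.sin (c * t) - a / c,
       c * t)) :
    ∀ a b c : ℝ, c ≠ 0 →
      DifferentiableAt ℝ F (a, b, c) ∧
      LinearMap.det ((fderiv ℝ F (a, b, c)) :
          ℝ × ℝ × ℝ →ₗ[ℝ] ℝ × ℝ × ℝ) = 2 * t * (1 - Real.cos (c * t)) / c ^ 2 ∧
      (¬ Function.Bijective (fderiv ℝ F (a, b, c)) ↔
        (t = 0 ∨ ∃ k : ℤ, c * t = 2 * π * (k : ℝ))) := by
  intro a b c hc
  -- Near `(a, b, c)` the third coordinate is nonzero, so the closed formula holds on a neighbourhood.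
  have hev : F =ᶠ[nhds (a, b, c)] fun v : ℝ × ℝ × ℝ =>
      ((v.1 * Real.sin (v.2.2 * t) - v.2.1 * Real.cos (v.2.2 * t) + v.2.1) * v.2.2⁻¹,
       (v.1 * Real.cos (v.2.2 * t) + v.2.1 * Real.sin (v.2.2 * t) - v.1) * v.2.2⁻¹,
       v.2.2 * t) := by
    have hopen : IsOpen {v : ℝ × ℝ × ℝ | v.2.2 ≠ 0} :=
      isOpen_ne_fun (by fun_prop) continuous_const
    filter_upwards [hopen.mem_nhds (show (a, b, c) ∈ {v : ℝ × ℝ × ℝ | v.2.2 ≠ 0} from hc)]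
      with v hv
    obtain ⟨x, y, z⟩ := v
    rw [hF x y z hv]
    ext <;> simp only [div_eq_mul_inv] <;> ring
  have hA : HasFDerivAt (fun v : ℝ × ℝ × ℝ => v.1) (ContinuousLinearMap.fst ℝ ℝ (ℝ × ℝ))
      (a, b, c) := hasFDerivAt_fst
  have hBC : HasFDerivAt (fun v : ℝ × ℝ × ℝ => v.2) (ContinuousLinearMap.snd ℝ ℝ (ℝ × ℝ))
      (a, b, c) := hasFDerivAt_snd
  have hB := hBC.fst
  have hC := hBC.snd
  have hCt := hC.mul_const t
  have hI := (hasDerivAt_inv hc).comp_hasFDerivAt (a, b, c) hC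
  have hX := (((hA.mul hCt.sin).sub (hB.mul hCt.cos)).add hB).mul hI
  have hY := (((hA.mul hCt.cos).add (hB.mul hCt.sin)).sub hA).mul hI
  have hD := (hX.prodMk (hY.prodMk hCt)).congr_of_eventuallyEq hev
  have hdet : LinearMap.det ((fderiv ℝ F (a, b, c)) : ℝ × ℝ × ℝ →ₗ[ℝ] ℝ × ℝ × ℝ)
      = 2 * t * (1 - Real.cos (c * t)) / c ^ 2 := by
    rw [det_of_block_triangular _ (Real.sin (c * t) / c) ((1 - Real.cos (c * t)) / c)
      ((Real.cos (c * t) - 1) / c) (Real.sin (c * t) / c)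
      ((a * Real.cos (c * t) + b * Real.sin (c * t)) * t / c
        - (a * Real.sin (c * t) - b * Real.cos (c * t) + b) / c ^ 2)
      ((b * Real.cos (c * t) - a * Real.sin (c * t)) * t / c
        - (a * Real.cos (c * t) + b * Real.sin (c * t) - a) / c ^ 2) t]
    · linear_combination t / c ^ 2 * Real.sin_sq_add_cos_sq (c * t)
    · intro x y z
      rw [hD.fderiv]
      ext <;> simp <;> field_simp <;> ring
  refine ⟨hD.differentiableAt, hdet, ?_⟩
  have hbij := bijective_iff_det_ne_zero (fderiv ℝ F (a, b, c) : ℝ × ℝ × ℝ →ₗ[ℝ] ℝ × ℝ × ℝ)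
  rw [hdet, ContinuousLinearMap.coe_coe] at hbij
  have hcos : 1 - Real.cos (c * t) = 0 ↔ ∃ k : ℤ, c * t = 2 * π * (k : ℝ) := by
    rw [sub_eq_zero, eq_comm, Real.cos_eq_one_iff]
    exact exists_congr fun k => by rw [eq_comm, mul_comm (k : ℝ)]
  rw [hbij, not_not, ← hcos]
  simp [hc]
end
end
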